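/- For every s ∈ [−1,1] and every t ∈ [0,1), one has 1 − 2st + t² > 0 and (1 − 2st + t²)^{−1/2} = Σ_{l=0}^∞ P_l(s) t^l, the series converging absolutely. -/

import Mathlib

open Real

/-- The Legendre polynomials, defined via Rodrigues' formula
`P_l(s) = (1/(2^l l!)) (d/ds)^l (s² − 1)^l`. -/
noncomputable def legendreP (l : ℕ) (s : ℝ) : ℝ :=
  (1 / ((2 : ℝ) ^ l * (Nat.factorial l : ℝ))) *
    iteratedDeriv l (fun t : ℝ => (t ^ 2 - 1) ^ l) s

/-!
Bonnet's recurrence, read off Rodrigues' formula, says that `f = ∑ P_l(s) X ^ l` is the formal power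
series with constant term `1` and `f ^ 2 * (1 - 2sX + X ^ 2) = 1`. If `z + w = 2s` and `zw = 1`, the
quadratic factors as `(1 - zX)(1 - wX)`, so `f` is the product of the binomial series
`(1 - zX) ^ (-1/2)` and `(1 - wX) ^ (-1/2)`. These converge absolutely at `t` as soon as `|zt| < 1`
and `|wt| < 1`, that is, when `t` is closer to `0` than both zeros `z`, `w` of the quadratic; there
`1 - zt` and `1 - wt` lie in the right half-plane, where the principal square root is
multiplicative. For `s ∈ [-1, 1]` both zeros lie on the unit circle.
-/

section Rodrigues

open Polynomial

theorem iterate_derivative_succ_mul_X {R : Type*} [CommSemiring R] (p : R[X]) (n : ℕ) :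
    derivative^[n + 1] (p * X) =
      X * derivative (derivative^[n] p) + (n + 1 : R[X]) * derivative^[n] p := by
  rw [iterate_derivative_mul_X, Function.iterate_succ_apply', Nat.add_sub_cancel, nsmul_eq_mul]
  push_cast
  ring

variable (R : Type*) [CommRing R]

/-- The polynomial `Dⁿ (X² - 1)ⁿ` of Rodrigues' formula, which is `2ⁿ n!` times the `n`-th Legendre
polynomial. Leaving out the normalisation makes it available over every commutative ring. -/
noncomputable def rodriguesPoly (n : ℕ) : R[X] :=
  derivative^[n] ((X ^ 2 - 1) ^ n)

theorem derivative_X_sq_sub_one_pow_succ (n : ℕ) :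
    derivative ((X ^ 2 - 1 : R[X]) ^ (n + 1)) =
      ((2 * (n + 1) : ℕ) : R[X]) * ((X ^ 2 - 1) ^ n * X) := by
  rw [derivative_pow_succ, derivative_sub, derivative_X_sq, derivative_one, map_add, map_natCast,
    map_one, map_ofNat]
  push_cast
  ring

theorem rodriguesPoly_succ_eq_iterate_derivative (n : ℕ) :
    rodriguesPoly R (n + 1) =
      ((2 * (n + 1) : ℕ) : R[X]) * derivative^[n] ((X ^ 2 - 1) ^ n * X) := by
  rw [rodriguesPoly, Function.iterate_succ_apply, derivative_X_sq_sub_one_pow_succ,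
    iterate_derivative_natCast_mul]

theorem derivative_rodriguesPoly_succ (n : ℕ) :
    derivative (rodriguesPoly R (n + 1)) =
      2 * (n + 1 : R[X]) *
        (X * derivative (rodriguesPoly R n) + (n + 1 : R[X]) * rodriguesPoly R n) := by
  rw [rodriguesPoly_succ_eq_iterate_derivative, derivative_natCast_mul,
    ← Function.iterate_succ_apply' derivative, iterate_derivative_succ_mul_X, rodriguesPoly]
  push_cast
  ring

theorem rodriguesPoly_succ (n : ℕ) :
    rodriguesPoly R (n + 1) =
      2 * ((X ^ 2 - 1) * derivative (rodriguesPoly R n) +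
        (n + 1 : R[X]) * X * rodriguesPoly R n) := by
  set q : R[X] := derivative^[n] ((X ^ 2 - 1) ^ n * X) with hq
  have h_chain : rodriguesPoly R (n + 1) = 2 * (n + 1 : R[X]) * q := by
    rw [rodriguesPoly_succ_eq_iterate_derivative, ← hq]
    push_cast
    ring
  have h_leibniz : rodriguesPoly R (n + 1) =
      X * (X * derivative (rodriguesPoly R n) + (n + 1 : R[X]) * rodriguesPoly R n)
        + (n + 1 : R[X]) * q - derivative (rodriguesPoly R n) := by
    have h_split : (X ^ 2 - 1 : R[X]) ^ (n + 1) =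
        (X ^ 2 - 1) ^ n * X * X - (X ^ 2 - 1) ^ n := by ring
    rw [rodriguesPoly, h_split, iterate_derivative_sub, iterate_derivative_succ_mul_X,
      ← Function.iterate_succ_apply' derivative, iterate_derivative_succ_mul_X,
      Function.iterate_succ_apply', rodriguesPoly, hq]
  linear_combination 2 * h_leibniz - h_chain

theorem rodriguesPoly_add_two (n : ℕ) :
    rodriguesPoly R (n + 2) =
      2 * (2 * n + 3 : R[X]) * X * rodriguesPoly R (n + 1) -
        4 * (n + 1 : R[X]) ^ 2 * rodriguesPoly R n := by
  have h_succ := rodriguesPoly_succ R n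
  rw [rodriguesPoly_succ R (n + 1), derivative_rodriguesPoly_succ]
  push_cast
  linear_combination -2 * (n + 1 : R[X]) * X * h_succ

end Rodrigues

section Legendre

theorem iteratedDeriv_polynomial_eval {𝕜 : Type*} [NontriviallyNormedField 𝕜]
    (p : Polynomial 𝕜) (n : ℕ) :
    iteratedDeriv n (fun x => p.eval x) = fun x => (Polynomial.derivative^[n] p).eval x := by
  induction n with
  | zero => simp only [iteratedDeriv_zero, Function.iterate_zero_apply]
  | succ n ih =>
    funext x
    rw [iteratedDeriv_succ, ih, Polynomial.deriv, Function.iterate_succ_apply']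

theorem legendreP_eq_eval_rodriguesPoly (n : ℕ) (s : ℝ) :
    legendreP n s = (rodriguesPoly ℝ n).eval s / (2 ^ n * n.factorial) := by
  have h_deriv := congrFun (iteratedDeriv_polynomial_eval ((Polynomial.X ^ 2 - 1) ^ n) n) s
  simp only [Polynomial.eval_pow, Polynomial.eval_sub, Polynomial.eval_X,
    Polynomial.eval_one] at h_deriv
  rw [legendreP, h_deriv, rodriguesPoly, one_div_mul_eq_div]

theorem legendreP_zero (s : ℝ) : legendreP 0 s = 1 := by
  simp [legendreP]

theorem legendreP_one (s : ℝ) : legendreP 1 s = s := by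
  simp [legendreP_eq_eval_rodriguesPoly, rodriguesPoly, one_add_one_eq_two]

theorem legendreP_bonnet (n : ℕ) (s : ℝ) :
    (n + 2) * legendreP (n + 2) s =
      (2 * n + 3) * s * legendreP (n + 1) s - (n + 1) * legendreP n s := by
  have h_rec := congrArg (Polynomial.eval s) (rodriguesPoly_add_two ℝ n)
  simp only [Polynomial.eval_sub, Polynomial.eval_mul, Polynomial.eval_add, Polynomial.eval_pow,
    Polynomial.eval_X, Polynomial.eval_one, Polynomial.eval_ofNat,
    Polynomial.eval_natCast] at h_rec
  simp only [legendreP_eq_eval_rodriguesPoly, h_rec, Nat.factorial_succ, pow_succ]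
  push_cast
  field_simp
  ring

end Legendre

section FormalGeneratingFunction

open PowerSeries

theorem coeff_X_mul_derivative {R : Type*} [CommSemiring R] (f : R⟦X⟧) (n : ℕ) :
    coeff n (X * d⁄dX R f) = n * coeff n f := by
  cases n with
  | zero => simp
  | succ n => rw [coeff_succ_X_mul, coeff_derivative, mul_comm, Nat.cast_succ]

section InvSqrtQuadratic

variable {R : Type*} [CommRing R] [IsAddTorsionFree R] {a : R} {f : R⟦X⟧}

theorem quadratic_mul_derivative_of_sq_mul_quadratic_eq_one
    (hf : f ^ 2 * (1 - C (2 * a) * X + X ^ 2) = 1) :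
    (1 - C (2 * a) * X + X ^ 2) * d⁄dX R f = (C a - X) * f := by
  have h_deriv := congrArg (d⁄dX R) hf
  simp only [Derivation.leibniz, derivative_pow, map_add, map_sub, derivative_one, derivative_C,
    derivative_X, smul_eq_mul] at h_deriv
  have h_twice : (2 : ℕ) • ((1 - C (2 * a) * X + X ^ 2) * d⁄dX R f) =
      (2 : ℕ) • ((C a - X) * f) := by
    have hC : (C (2 * a) : R⟦X⟧) = 2 * C a := by rw [map_mul, map_ofNat]
    rw [hC] at hf h_deriv ⊢
    push_cast [nsmul_eq_mul] at h_deriv ⊢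
    linear_combination f * (1 - 2 * C a * X + X ^ 2) * h_deriv -
      (2 * (1 - 2 * C a * X + X ^ 2) * d⁄dX R f - 2 * (C a - X) * f) * hf
  ext n
  apply nsmul_right_injective two_ne_zero
  simpa only [map_nsmul] using congrArg (coeff n) h_twice

theorem coeff_one_of_sq_mul_quadratic_eq_one (hf : f ^ 2 * (1 - C (2 * a) * X + X ^ 2) = 1) :
    coeff 1 f = a * constantCoeff f := by
  have h_coeff := congrArg constantCoeff (quadratic_mul_derivative_of_sq_mul_quadratic_eq_one hf)
  rw [map_mul, map_mul, ← coeff_zero_eq_constantCoeff_apply (d⁄dX R f), coeff_derivative] at h_coeff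
  simpa using h_coeff

theorem coeff_add_two_of_sq_mul_quadratic_eq_one
    (hf : f ^ 2 * (1 - C (2 * a) * X + X ^ 2) = 1) (n : ℕ) :
    (n + 2) * coeff (n + 2) f = (2 * n + 3) * a * coeff (n + 1) f - (n + 1) * coeff n f := by
  have h_euler : X * d⁄dX R f - C (2 * a) * (X * (X * d⁄dX R f)) + X * (X * (X * d⁄dX R f)) =
      C a * (X * f) - X * (X * f) := by
    linear_combination X * quadratic_mul_derivative_of_sq_mul_quadratic_eq_one hf
  have h_coeff := congrArg (coeff (n + 2)) h_euler
  simp only [map_add, map_sub, coeff_C_mul, coeff_succ_X_mul, coeff_derivative,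
    coeff_X_mul_derivative] at h_coeff
  push_cast at h_coeff
  linear_combination h_coeff

end InvSqrtQuadratic

theorem coeff_eq_legendreP {s : ℝ} {f : ℂ⟦X⟧} (hf : f ^ 2 * (1 - C (2 * s : ℂ) * X + X ^ 2) = 1)
    (hf₀ : constantCoeff f = 1) (n : ℕ) : coeff n f = legendreP n s := by
  induction n using Nat.twoStepInduction with
  | zero => rw [coeff_zero_eq_constantCoeff_apply, hf₀, legendreP_zero, Complex.ofReal_one]
  | one => rw [coeff_one_of_sq_mul_quadratic_eq_one hf, hf₀, legendreP_one, mul_one]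
  | more n ih ih' =>
    have h_bonnet : ((n + 2) * legendreP (n + 2) s : ℂ) =
        (2 * n + 3) * s * legendreP (n + 1) s - (n + 1) * legendreP n s :=
      mod_cast legendreP_bonnet n s
    have h_ne : (n + 2 : ℂ) ≠ 0 := mod_cast (n + 1).succ_ne_zero
    apply mul_left_cancel₀ h_ne
    rw [h_bonnet, ← ih, ← ih', coeff_add_two_of_sq_mul_quadratic_eq_one hf]

/-- The formal power series `(1 - z X) ^ (-1/2)`. -/
noncomputable def invSqrtOneSub {K : Type*} [Field K] [CharZero K] (z : K) : K⟦X⟧ :=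
  rescale (-z) (binomialSeries K (-2⁻¹ : K))

theorem invSqrtOneSub_sq_mul {K : Type*} [Field K] [CharZero K] (z : K) :
    invSqrtOneSub z ^ 2 * (1 - C z * X) = 1 := by
  have h_linear : 1 - C z * X = rescale (-z) (binomialSeries K (1 : K)) := by
    rw [← Nat.cast_one (R := K), binomialSeries_nat, pow_one, map_add, map_one, rescale_X, map_neg,
      neg_mul, ← sub_eq_add_neg]
  rw [invSqrtOneSub, h_linear, ← map_pow, ← map_mul, sq, ← binomialSeries_add,
    ← binomialSeries_add, show (-2⁻¹ + -2⁻¹ + 1 : K) = 0 by ring, binomialSeries_zero,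
    map_one]

theorem constantCoeff_invSqrtOneSub {K : Type*} [Field K] [CharZero K] (z : K) :
    constantCoeff (invSqrtOneSub z) = 1 := by
  rw [← coeff_zero_eq_constantCoeff_apply, invSqrtOneSub, coeff_rescale,
    coeff_zero_eq_constantCoeff_apply, binomialSeries_constantCoeff, pow_zero, one_mul]

theorem coeff_invSqrtOneSub_mul_invSqrtOneSub {s : ℝ} {z w : ℂ} (h_add : z + w = 2 * s)
    (h_mul : z * w = 1) (n : ℕ) :
    coeff n (invSqrtOneSub z * invSqrtOneSub w) = legendreP n s := by
  have h_factor : (1 - C (2 * s : ℂ) * X + X ^ 2 : ℂ⟦X⟧) = (1 - C z * X) * (1 - C w * X) := by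
    have hC_add : C z + C w = (C (2 * s : ℂ) : ℂ⟦X⟧) := by rw [← map_add, h_add]
    have hC_mul : C z * C w = (1 : ℂ⟦X⟧) := by rw [← map_mul, h_mul, map_one]
    linear_combination X * hC_add - X ^ 2 * hC_mul
  apply coeff_eq_legendreP
  · rw [h_factor, mul_pow, mul_mul_mul_comm, invSqrtOneSub_sq_mul, invSqrtOneSub_sq_mul, one_mul]
  · rw [map_mul, constantCoeff_invSqrtOneSub, constantCoeff_invSqrtOneSub, one_mul]

end FormalGeneratingFunction

section Convergence

open Complex PowerSeries

theorem hasSum_coeff_mul_of_summable_norm {R : Type*} [NormedCommRing R] [CompleteSpace R]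
    {f g : R⟦X⟧} {a b t : R} (hf_norm : Summable fun n : ℕ => ‖coeff n f * t ^ n‖)
    (hg_norm : Summable fun n : ℕ => ‖coeff n g * t ^ n‖)
    (hf : HasSum (fun n : ℕ => coeff n f * t ^ n) a)
    (hg : HasSum (fun n : ℕ => coeff n g * t ^ n) b) :
    HasSum (fun n : ℕ => coeff n (f * g) * t ^ n) (a * b) := by
  have h_term (n : ℕ) : coeff n (f * g) * t ^ n =
      ∑ p ∈ Finset.HasAntidiagonal.antidiagonal n,
        coeff p.1 f * t ^ p.1 * (coeff p.2 g * t ^ p.2) := by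
    rw [coeff_mul, Finset.sum_mul]
    refine Finset.sum_congr rfl fun p hp => ?_
    rw [← Finset.HasAntidiagonal.mem_antidiagonal.1 hp, pow_add]
    ring
  rw [← hf.tsum_eq, ← hg.tsum_eq,
    tsum_mul_tsum_eq_tsum_sum_antidiagonal_of_summable_norm hf_norm hg_norm]
  simpa only [h_term] using
    (summable_norm_sum_mul_antidiagonal_of_summable_norm hf_norm hg_norm).of_norm.hasSum

theorem hasSum_choose_mul_pow (a : ℂ) {z : ℂ} (hz : ‖z‖ < 1) :
    HasSum (fun n : ℕ => Ring.choose a n * z ^ n) ((1 + z) ^ a) := by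
  have hz' : z ∈ Metric.eball (0 : ℂ) 1 := by simpa [← ofReal_norm] using hz
  simpa [_root_.binomialSeries, FormalMultilinearSeries.coeff_ofScalars, mul_comm] using
    (one_add_cpow_hasFPowerSeriesOnBall_zero (a := a)).hasSum hz'

theorem hasSum_coeff_invSqrtOneSub {z t : ℂ} (h : ‖z * t‖ < 1) :
    HasSum (fun n : ℕ => coeff n (invSqrtOneSub z) * t ^ n) (1 - z * t).sqrt⁻¹ := by
  have h_term (n : ℕ) : coeff n (invSqrtOneSub z) * t ^ n =
      Ring.choose (-2⁻¹ : ℂ) n * (-(z * t)) ^ n := by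
    rw [invSqrtOneSub, coeff_rescale, binomialSeries_coeff, smul_eq_mul, mul_one, ← neg_mul,
      mul_pow]
    ring
  rw [Complex.sqrt, ← cpow_neg, sub_eq_add_neg]
  simpa only [h_term] using hasSum_choose_mul_pow (-2⁻¹) (by rwa [norm_neg])

theorem abs_arg_add_arg_lt_pi {x y : ℂ} (hx : 0 < x.re) (hy : 0 < y.re) :
    |x.arg + y.arg| < π := by
  have hx_arg := abs_arg_lt_pi_div_two_iff.2 (Or.inl hx)
  have hy_arg := abs_arg_lt_pi_div_two_iff.2 (Or.inl hy)
  linarith [abs_add_le x.arg y.arg]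

theorem mul_mem_slitPlane_of_re_pos {x y : ℂ} (hx : 0 < x.re) (hy : 0 < y.re) :
    x * y ∈ slitPlane := by
  have hx₀ : x ≠ 0 := ne_zero_of_re_pos hx
  have hy₀ : y ≠ 0 := ne_zero_of_re_pos hy
  obtain ⟨h_lower, h_upper⟩ := abs_lt.1 (abs_arg_add_arg_lt_pi hx hy)
  rw [mem_slitPlane_iff_arg, arg_mul hx₀ hy₀ ⟨h_lower, h_upper.le⟩]
  exact ⟨h_upper.ne, mul_ne_zero hx₀ hy₀⟩

theorem mul_cpow_of_re_pos {x y : ℂ} (hx : 0 < x.re) (hy : 0 < y.re) (a : ℂ) :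
    (x * y) ^ a = x ^ a * y ^ a := by
  have hx₀ : x ≠ 0 := ne_zero_of_re_pos hx
  have hy₀ : y ≠ 0 := ne_zero_of_re_pos hy
  obtain ⟨h_lower, h_upper⟩ := abs_lt.1 (abs_arg_add_arg_lt_pi hx hy)
  rw [cpow_def_of_ne_zero (mul_ne_zero hx₀ hy₀), cpow_def_of_ne_zero hx₀, cpow_def_of_ne_zero hy₀,
    log_mul hx₀ hy₀ ⟨h_lower, h_upper.le⟩, add_mul, Complex.exp_add]

theorem sqrt_mul_of_re_pos {x y : ℂ} (hx : 0 < x.re) (hy : 0 < y.re) :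
    (x * y).sqrt = x.sqrt * y.sqrt :=
  mul_cpow_of_re_pos hx hy _

theorem re_one_sub_pos_of_norm_lt_one {z : ℂ} (hz : ‖z‖ < 1) : 0 < (1 - z).re := by
  rw [sub_re, one_re, sub_pos]
  exact (re_le_norm z).trans_lt hz

theorem hasSum_legendreP_mul_pow {s : ℝ} {z w t : ℂ} (h_add : z + w = 2 * s) (h_mul : z * w = 1)
    (hz : ‖z * t‖ < 1) (hw : ‖w * t‖ < 1) :
    HasSum (fun n : ℕ => (legendreP n s : ℂ) * t ^ n) ((1 - z * t) * (1 - w * t)).sqrt⁻¹ := by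
  have hz_sum := hasSum_coeff_invSqrtOneSub hz
  have hw_sum := hasSum_coeff_invSqrtOneSub hw
  rw [sqrt_mul_of_re_pos (re_one_sub_pos_of_norm_lt_one hz)
    (re_one_sub_pos_of_norm_lt_one hw), mul_inv]
  simpa only [coeff_invSqrtOneSub_mul_invSqrtOneSub h_add h_mul] using
    hasSum_coeff_mul_of_summable_norm hz_sum.summable.norm hw_sum.summable.norm hz_sum hw_sum

end Convergence

section Zeros

theorem norm_mul_lt_one_of_mul_eq_one {K : Type*} [NormedField K] {z w t : K} (h_mul : z * w = 1)
    (ht : ‖t‖ < ‖w‖) : ‖z * t‖ < 1 := by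
  have hw : ‖z‖ * ‖w‖ = 1 := by rw [← norm_mul, h_mul, norm_one]
  have hz : 0 < ‖z‖ := norm_pos_iff.2 (left_ne_zero_of_mul_eq_one h_mul)
  calc ‖z * t‖ = ‖z‖ * ‖t‖ := norm_mul z t
    _ < ‖z‖ * ‖w‖ := mul_lt_mul_of_pos_left ht hz
    _ = 1 := hw

theorem exists_add_eq_two_mul_and_mul_eq_one {K : Type*} [Field K] [IsAlgClosed K] (a : K) :
    ∃ z w : K, z + w = 2 * a ∧ z * w = 1 := by
  obtain ⟨r, hr⟩ := IsAlgClosed.exists_pow_nat_eq (a ^ 2 - 1) two_pos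
  exact ⟨a + r, a - r, by ring, by linear_combination -hr⟩

theorem norm_eq_one_of_quadratic_eq_zero {s : ℝ} (hs : |s| ≤ 1) {u : ℂ}
    (hu : 1 - 2 * s * u + u ^ 2 = 0) : ‖u‖ = 1 := by
  have h_re : 1 - 2 * s * u.re + (u.re ^ 2 - u.im ^ 2) = 0 := by
    simpa [sq] using congrArg Complex.re hu
  have h_im : u.im * (u.re - s) = 0 := by
    have h_im_eq : -(2 * s * u.im) + (u.re * u.im + u.im * u.re) = 0 := by
      simpa [sq] using congrArg Complex.im hu
    linarith
  have hs_sq : s ^ 2 ≤ 1 := (sq_le_one_iff_abs_le_one s).2 hs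
  rw [← sq_eq_sq₀ (norm_nonneg u) zero_le_one, Complex.sq_norm, Complex.normSq_apply, one_pow]
  rcases mul_eq_zero.1 h_im with h_real | h_re_eq
  · rw [h_real] at h_re
    have h_double : (u.re - s) ^ 2 ≤ 0 := by linarith
    have h_eq : u.re = s := sub_eq_zero.1 (sq_nonpos_iff _ |>.1 h_double)
    rw [h_eq] at h_re
    rw [h_real, h_eq]
    linarith
  · rw [sub_eq_zero.1 h_re_eq] at h_re ⊢
    linarith

end Zeros

theorem complex_sqrt_ofReal {x : ℝ} (hx : 0 ≤ x) : (x : ℂ).sqrt = (√x : ℂ) := by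
  rw [Complex.sqrt_of_nonneg (Complex.zero_le_real.2 hx), Complex.ofReal_re]

theorem pos_and_summable_and_tsum_eq_of_ofReal {c : ℕ → ℝ} {x : ℝ}
    (h : (x : ℂ) ∈ Complex.slitPlane ∧ Summable (fun n => ‖(c n : ℂ)‖) ∧
      ∑' n, (c n : ℂ) = (Complex.sqrt x)⁻¹) :
    0 < x ∧ Summable (fun n => |c n|) ∧ ∑' n, c n = (√x)⁻¹ := by
  obtain ⟨h_slit, h_summable, h_tsum⟩ := h
  have hx : 0 < x := Complex.ofReal_mem_slitPlane.1 h_slit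
  rw [complex_sqrt_ofReal hx.le] at h_tsum
  exact ⟨hx, mod_cast h_summable, mod_cast h_tsum⟩

theorem stmt2_general (s : ℝ) (t : ℂ) (ht : ∀ u : ℂ, 1 - 2 * s * u + u ^ 2 = 0 → ‖t‖ < ‖u‖) :
    1 - 2 * s * t + t ^ 2 ∈ Complex.slitPlane ∧
    Summable (fun l : ℕ => ‖(legendreP l s : ℂ) * t ^ l‖) ∧
    ∑' l : ℕ, (legendreP l s : ℂ) * t ^ l = (Complex.sqrt (1 - 2 * s * t + t ^ 2))⁻¹ := by
  obtain ⟨z, w, h_add, h_mul⟩ := exists_add_eq_two_mul_and_mul_eq_one (s : ℂ)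
  have hz : ‖z * t‖ < 1 :=
    norm_mul_lt_one_of_mul_eq_one h_mul (ht w (by linear_combination w * h_add - h_mul))
  have hw : ‖w * t‖ < 1 :=
    norm_mul_lt_one_of_mul_eq_one (mul_comm w z ▸ h_mul)
      (ht z (by linear_combination z * h_add - h_mul))
  have h_factor : 1 - 2 * s * t + t ^ 2 = (1 - z * t) * (1 - w * t) := by
    linear_combination t * h_add - t ^ 2 * h_mul
  have h_sum := hasSum_legendreP_mul_pow h_add h_mul hz hw
  rw [h_factor]
  exact ⟨mul_mem_slitPlane_of_re_pos (re_one_sub_pos_of_norm_lt_one hz)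
    (re_one_sub_pos_of_norm_lt_one hw), h_sum.summable.norm, h_sum.tsum_eq⟩

/-- Generating function of the Legendre polynomials: for `s ∈ [−1,1]` and `t ∈ [0,1)`,
`1 − 2st + t² > 0` and `(1 − 2st + t²)^{−1/2} = Σ_{l} P_l(s) t^l`, the series
converging absolutely. -/
theorem stmt2 (s t : ℝ) (hs : -1 ≤ s) (hs' : s ≤ 1) (ht : 0 ≤ t) (ht' : t < 1) :
    0 < 1 - 2 * s * t + t ^ 2 ∧
    Summable (fun l : ℕ => |legendreP l s * t ^ l|) ∧
    ∑' l : ℕ, legendreP l s * t ^ l = (Real.sqrt (1 - 2 * s * t + t ^ 2))⁻¹ := by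
  refine pos_and_summable_and_tsum_eq_of_ofReal (mod_cast stmt2_general s t fun u hu => ?_)
  rwa [norm_eq_one_of_quadratic_eq_zero (abs_le.2 ⟨hs, hs'⟩) hu, Complex.norm_of_nonneg ht]
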